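/- Clustering of the rectangular-polar change of variables at the target point: for every α ∈ (−1, 1), the map w_α is (p − 1) times continuously differentiable on (−1, 1), and its k-th derivative at τ = 0 vanishes for every integer k with 1 ≤ k ≤ p − 1. -/

import Mathlib

/-!
Since `v 0 = 0` and `v (2π - τ) = 1 - v τ`, the function `w` is `v ^ p` times an analytic
function: its denominator `v ^ p + (1 - v) ^ p` never vanishes. Hence `w` vanishes to order `p` at
`0`. On each side of the origin `w_α` is `α` plus a rescaling of `w`, so the jets of order `p - 1`
at `0` of these two branches are both those of the constant `α`, and functions whose jets of order
`n` agree at a point glue to a `C^n` function.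
-/

open Real

/-- The function `v` from equation (colt_kress_2), depending on an integer parameter `p`. -/
noncomputable def vCK (p : ℕ) (τ : ℝ) : ℝ :=
  (1 / (p : ℝ) - 1 / 2) * ((π - τ) / π) ^ 3 + (1 / (p : ℝ)) * ((τ - π) / π) + 1 / 2

/-- The Colton–Kress change of variables `w` from equation (colt_kress_1). -/
noncomputable def wCK (p : ℕ) (τ : ℝ) : ℝ :=
  2 * π * (vCK p τ) ^ p / ((vCK p τ) ^ p + (vCK p (2 * π - τ)) ^ p)

/-- The rectangular-polar change of variables `w_α` for `α ∈ (−1, 1)`. -/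
noncomputable def wRP (p : ℕ) (α : ℝ) (τ : ℝ) : ℝ :=
  α + ((Real.sign τ - α) / π) * wCK p (π * |τ|)

open scoped ContDiff

section Piecewise

variable {X Y : Type*} [TopologicalSpace X] {s : Set X} [∀ x, Decidable (x ∈ s)] {f g : X → Y}

lemma eqOn_piecewise_closure (h : Set.EqOn f g (frontier s)) :
    Set.EqOn (s.piecewise f g) f (closure s) := by
  intro x hx
  by_cases hxs : x ∈ s
  · simp [hxs]
  · simpa [hxs] using (h ⟨hx, fun hi => hxs (interior_subset hi)⟩).symm

lemma eqOn_piecewise_closure_compl (h : Set.EqOn f g (frontier s)) :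
    Set.EqOn (s.piecewise f g) g (closure sᶜ) := by
  classical
  rw [← Set.piecewise_compl]
  exact eqOn_piecewise_closure (by simpa only [frontier_compl] using h.symm)

end Piecewise

section PiecewiseDeriv

variable {𝕜 E : Type*} [NontriviallyNormedField 𝕜] [NormedAddCommGroup E] [NormedSpace 𝕜 E]

lemma hasDerivWithinAt_of_eqOn_closure {F f F' f' : 𝕜 → E} {t : Set 𝕜} {x : 𝕜}
    (hf : HasDerivAt f (f' x) x) (hF : Set.EqOn F f (closure t))
    (hF' : Set.EqOn F' f' (closure t)) : HasDerivWithinAt F (F' x) t x := by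
  by_cases hx : x ∈ closure t
  · rw [hF' hx]
    exact hf.hasDerivWithinAt.congr (fun y hy => hF (subset_closure hy)) (hF hx)
  · exact HasFDerivWithinAt.of_notMem_closure hx

variable {s : Set 𝕜} [∀ x, Decidable (x ∈ s)] {f g : 𝕜 → E}

lemma hasDerivAt_piecewise {f' g' : 𝕜 → E} {x : 𝕜}
    (hf : HasDerivAt f (f' x) x) (hg : HasDerivAt g (g' x) x)
    (h : Set.EqOn f g (frontier s)) (h' : Set.EqOn f' g' (frontier s)) :
    HasDerivAt (s.piecewise f g) (s.piecewise f' g' x) x := by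
  rw [← hasDerivWithinAt_univ, ← Set.union_compl_self s]
  exact
    (hasDerivWithinAt_of_eqOn_closure hf (eqOn_piecewise_closure h)
      (eqOn_piecewise_closure h')).union
    (hasDerivWithinAt_of_eqOn_closure hg (eqOn_piecewise_closure_compl h)
      (eqOn_piecewise_closure_compl h'))

lemma hasDerivAt_iteratedDeriv {n : ℕ∞} {k : ℕ} (hf : ContDiff 𝕜 n f) (hk : k < n) (x : 𝕜) :
    HasDerivAt (iteratedDeriv k f) (iteratedDeriv (k + 1) f x) x := by
  rw [iteratedDeriv_succ]
  exact ((contDiff_iff_iteratedDeriv.1 hf).2 k hk x).hasDerivAt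

variable {n : ℕ∞}

lemma iteratedDeriv_piecewise (hf : ContDiff 𝕜 n f) (hg : ContDiff 𝕜 n g)
    (h : ∀ k : ℕ, k ≤ n → Set.EqOn (iteratedDeriv k f) (iteratedDeriv k g) (frontier s))
    {k : ℕ} (hk : k ≤ n) :
    iteratedDeriv k (s.piecewise f g) = s.piecewise (iteratedDeriv k f) (iteratedDeriv k g) := by
  induction k with
  | zero => simp only [iteratedDeriv_zero]
  | succ k ih =>
    have hkn : (k : ℕ∞) < n := (ENat.add_one_le_iff (ENat.natCast_ne_top k)).1 (mod_cast hk)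
    rw [iteratedDeriv_succ, ih hkn.le]
    exact funext fun x => (hasDerivAt_piecewise (hasDerivAt_iteratedDeriv hf hkn x)
      (hasDerivAt_iteratedDeriv hg hkn x) (h k hkn.le) (h (k + 1) hk)).deriv

lemma contDiff_piecewise (hf : ContDiff 𝕜 n f) (hg : ContDiff 𝕜 n g)
    (h : ∀ k : ℕ, k ≤ n → Set.EqOn (iteratedDeriv k f) (iteratedDeriv k g) (frontier s)) :
    ContDiff 𝕜 n (s.piecewise f g) := by
  refine contDiff_iff_iteratedDeriv.2 ⟨fun k hk => ?_, fun k hk x => ?_⟩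
  · rw [iteratedDeriv_piecewise hf hg h hk]
    exact ((contDiff_iff_iteratedDeriv.1 hf).1 k hk).piecewise (h k hk)
      ((contDiff_iff_iteratedDeriv.1 hg).1 k hk)
  · rw [iteratedDeriv_piecewise hf hg h hk.le]
    exact (hasDerivAt_piecewise (hasDerivAt_iteratedDeriv hf hk x)
      (hasDerivAt_iteratedDeriv hg hk x) (h k hk.le)
      (h (k + 1) (mod_cast Order.add_one_le_of_lt hk))).differentiableAt

end PiecewiseDeriv

lemma iteratedDeriv_pow_mul_eq_zero {𝕜 : Type*} [NontriviallyNormedField 𝕜] [CharZero 𝕜]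
    [CompleteSpace 𝕜] {f g : 𝕜 → 𝕜} {z : 𝕜} (hf : AnalyticAt 𝕜 f z) (hg : AnalyticAt 𝕜 g z)
    (hfz : f z = 0) {k n : ℕ} (hk : k < n) : iteratedDeriv k (f ^ n * g) z = 0 := by
  suffices n ≤ analyticOrderAt (f ^ n * g) z from
    (natCast_le_analyticOrderAt_iff_iteratedDeriv_eq_zero ((hf.pow n).mul hg)).1 this k hk
  have hf_order : 1 ≤ analyticOrderAt f z :=
    Order.one_le_iff_ne_zero.2 (hf.analyticOrderAt_ne_zero.2 hfz)
  calc (n : ℕ∞) = n • 1 := by simp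
    _ ≤ n • analyticOrderAt f z := nsmul_le_nsmul_right hf_order n
    _ ≤ n • analyticOrderAt f z + analyticOrderAt g z := le_self_add
    _ = analyticOrderAt (f ^ n * g) z := by
      rw [analyticOrderAt_mul (hf.pow n) hg, analyticOrderAt_pow hf]

lemma pow_add_pow_pos_of_add_pos {R : Type*} [Ring R] [LinearOrder R] [IsStrictOrderedRing R]
    {x y : R} (h : 0 < x + y) (n : ℕ) : 0 < x ^ n + y ^ n := by
  rcases n.even_or_odd with hn | hn
  · rcases eq_or_ne x 0 with rfl | hx
    · exact add_pos_of_nonneg_of_pos (hn.pow_nonneg _) (pow_pos (by simpa using h) n)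
    · exact add_pos_of_pos_of_nonneg (hn.pow_pos hx) (hn.pow_nonneg y)
  · have hlt : (-y) ^ n < x ^ n := hn.strictMono_pow (neg_lt_iff_pos_add.2 h)
    rwa [hn.neg_pow, neg_lt_iff_pos_add] at hlt

section ColtonKress

variable (p : ℕ)

lemma vCK_zero : vCK p 0 = 0 := by
  simp only [vCK, sub_zero, zero_sub, div_self pi_ne_zero, neg_div]
  ring

lemma vCK_add_vCK_two_pi_sub (τ : ℝ) : vCK p τ + vCK p (2 * π - τ) = 1 := by
  simp only [vCK]
  field_simp
  ring

lemma vCK_pow_add_vCK_two_pi_sub_pow_pos (τ : ℝ) : 0 < vCK p τ ^ p + vCK p (2 * π - τ) ^ p :=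
  pow_add_pow_pos_of_add_pos (by simp [vCK_add_vCK_two_pi_sub]) p

lemma contDiff_vCK {n : ℕ∞ω} : ContDiff ℝ n (vCK p) := by
  unfold vCK
  fun_prop

/-- The quotient `w / v ^ p`, written so that it makes sense at the zeros of `v`. -/
noncomputable def cofactorCK (τ : ℝ) : ℝ :=
  2 * π / (vCK p τ ^ p + vCK p (2 * π - τ) ^ p)

lemma wCK_eq_pow_mul_cofactorCK : wCK p = vCK p ^ p * cofactorCK p := by
  ext τ
  simp only [wCK, cofactorCK, Pi.mul_apply, Pi.pow_apply]
  ring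

lemma contDiff_cofactorCK {n : ℕ∞ω} : ContDiff ℝ n (cofactorCK p) := by
  have hv : ContDiff ℝ n (vCK p) := contDiff_vCK p
  exact ContDiff.div (by fun_prop) (by fun_prop)
    fun τ => (vCK_pow_add_vCK_two_pi_sub_pow_pos p τ).ne'

lemma contDiff_wCK {n : ℕ∞ω} : ContDiff ℝ n (wCK p) := by
  rw [wCK_eq_pow_mul_cofactorCK]
  exact ((contDiff_vCK p).pow p).mul (contDiff_cofactorCK p)

variable {p}

lemma iteratedDeriv_wCK_zero {k : ℕ} (hk : k < p) : iteratedDeriv k (wCK p) 0 = 0 := by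
  rw [wCK_eq_pow_mul_cofactorCK]
  exact iteratedDeriv_pow_mul_eq_zero (contDiff_vCK p).contDiffAt.analyticAt
    (contDiff_cofactorCK p).contDiffAt.analyticAt (vCK_zero p) hk

lemma wCK_zero (hp : p ≠ 0) : wCK p 0 = 0 := by
  simpa using iteratedDeriv_wCK_zero (k := 0) (Nat.pos_of_ne_zero hp)

end ColtonKress

section RectangularPolar

/-- The branch of `w_α` on the side of the origin where `sgn τ = σ`, for `σ = ±1`, extended to all
of `ℝ`: there `|τ| = σ * τ`. -/
noncomputable def branchRP (p : ℕ) (α σ τ : ℝ) : ℝ :=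
  α + (σ - α) / π * wCK p (π * σ * τ)

variable {p : ℕ} (α σ : ℝ)

lemma contDiff_branchRP {n : ℕ∞ω} : ContDiff ℝ n (branchRP p α σ) := by
  have hw : ContDiff ℝ n (wCK p) := contDiff_wCK p
  unfold branchRP
  fun_prop

lemma iteratedDeriv_branchRP_zero {k : ℕ} (hk : k < p) :
    iteratedDeriv k (branchRP p α σ) 0 = if k = 0 then α else 0 := by
  rcases Nat.eq_zero_or_pos k with rfl | hk_pos
  · simp [branchRP, wCK_zero hk.ne']
  · have hw : iteratedDeriv k (fun τ => wCK p (π * σ * τ)) 0 = 0 := by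
      simp [iteratedDeriv_comp_const_mul (contDiff_wCK p), iteratedDeriv_wCK_zero hk]
    unfold branchRP
    rw [iteratedDeriv_const_add hk_pos, iteratedDeriv_const_mul_field, hw, mul_zero,
      if_neg hk_pos.ne']

lemma wRP_eq_piecewise_branchRP (hp : p ≠ 0) :
    wRP p α = (Set.Iic 0).piecewise (branchRP p α (-1)) (branchRP p α 1) := by
  ext τ
  rcases lt_trichotomy τ 0 with hτ | rfl | hτ
  · simp [wRP, branchRP, hτ.le, Real.sign_of_neg hτ, abs_of_neg hτ]
  · simp [wRP, branchRP, wCK_zero hp]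
  · simp [wRP, branchRP, hτ.not_ge, Real.sign_of_pos hτ, abs_of_pos hτ]

end RectangularPolar

theorem wRP_clustering_at_target_general (p : ℕ) (hp : p ≠ 0) (α : ℝ) :
    ContDiff ℝ (p - 1 : ℕ) (wRP p α) ∧
    (∀ k : ℕ, 1 ≤ k → k ≤ p - 1 → iteratedDeriv k (wRP p α) 0 = 0) := by
  have lt_p {k : ℕ} (hk : k ≤ p - 1) : k < p := by lia
  have jets_agree (k : ℕ) (hk : (k : ℕ∞) ≤ (p - 1 : ℕ)) :
      Set.EqOn (iteratedDeriv k (branchRP p α (-1))) (iteratedDeriv k (branchRP p α 1))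
        (frontier (Set.Iic 0)) := by
    rw [frontier_Iic, Set.eqOn_singleton]
    simp only [iteratedDeriv_branchRP_zero _ _ (lt_p (mod_cast hk))]
  have hbranch (σ : ℝ) : ContDiff ℝ ((p - 1 : ℕ) : ℕ∞) (branchRP p α σ) := contDiff_branchRP α σ
  rw [wRP_eq_piecewise_branchRP α hp]
  refine ⟨contDiff_piecewise (hbranch (-1)) (hbranch 1) jets_agree, fun k hk1 hk2 => ?_⟩
  rw [iteratedDeriv_piecewise (hbranch (-1)) (hbranch 1) jets_agree (mod_cast hk2)]
  simp [iteratedDeriv_branchRP_zero _ _ (lt_p hk2), Nat.one_le_iff_ne_zero.1 hk1]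

theorem wRP_clustering_at_target (p : ℕ) (hp : 2 ≤ p)
    (α : ℝ) (hα : α ∈ Set.Ioo (-1 : ℝ) 1) :
    ContDiffOn ℝ (p - 1 : ℕ) (wRP p α) (Set.Ioo (-1) 1) ∧
    (∀ k : ℕ, 1 ≤ k → k ≤ p - 1 → iteratedDeriv k (wRP p α) 0 = 0) :=
  (wRP_clustering_at_target_general p (by lia) α).imp_left ContDiff.contDiffOn
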